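/- arXiv:math/0304414 — 2 statements merged into one kernel-verified Lean document; each statement's English description precedes it below -/
import Mathlib

section
/- There exists a perfect (closed, nonempty, with no isolated points) subset P of 𝒫(ω) (identified with Cantor space 2^ω) consisting of infinite subsets of ω which is independent: for every pair of disjoint finite subsets F₁, F₂ of P, the set (⋂_{a ∈ F₁} a) ∩ (⋂_{a ∈ F₂} (ω ∖ a)) is infinite. -/
/-!
The classical Fichtenholz–Kantorovich–Hausdorff independent family is indexed by Cantor space and
lives on the countable set of pairs `(k, A)`, where `A` is a finite family of finite sets: the member
attached to `x` consists of the pairs such that the trace `x ∩ k` belongs to `A`. Finitely many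
points have pairwise distinct traces for all large `k`, so taking for `A` the set of traces of the
points of `F₁` gives, for each such `k`, a point in the required Boolean combination. The map sending
`x` to its member is a continuous injection of the compact perfect space `2^ω`, so its range is
perfect (`perfect_range_indep`). Every member is infinite by independence with `F₁` a singleton and
`F₂` empty.
-/

/-- Cantor space `2^ω`, whose points are identified with subsets of `ω`. -/
abbrev Cantor : Type := ℕ → Bool

/-- The subset of `ω` coded by a point of Cantor space. -/
def toSet (x : Cantor) : Set ℕ := {n | x n = true}

/-- `𝓑` is an ω-cover of `X`: every finite subset of `X` is included in a member
of `𝓑`, but `X` itself is not a member of `𝓑`. -/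
def IsOmegaCover {α : Type*} (X : Set α) (𝓑 : Set (Set α)) : Prop :=
  (∀ F : Set α, F ⊆ X → F.Finite → ∃ B ∈ 𝓑, F ⊆ B) ∧ X ∉ 𝓑

/-- `𝓑` is a γ-cover of `X`: `𝓑` is infinite and every element of `X` belongs to
all but finitely many members of `𝓑`. -/
def IsGammaCover {α : Type*} (X : Set α) (𝓑 : Set (Set α)) : Prop :=
  𝓑.Infinite ∧ ∀ x ∈ X, {B ∈ 𝓑 | x ∉ B}.Finite

/-- `X` is a Borel-cover γ-set: every countable ω-cover of `X` by Borel subsets of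
Cantor space contains a γ-cover of `X`. -/
def IsBorelGammaSet (X : Set Cantor) : Prop :=
  ∀ 𝓑 : Set (Set Cantor), 𝓑.Countable → (∀ B ∈ 𝓑, MeasurableSet B) →
    IsOmegaCover X 𝓑 → ∃ 𝓒 ⊆ 𝓑, IsGammaCover X 𝓒

open Filter Topology

/-- The trace `x ∩ k` on `{0, …, k - 1}` of the subset of `ω` coded by `x`. -/
def trace (x : Cantor) (k : ℕ) : Finset ℕ := (Finset.range k).filter (fun i => x i = true)

/-- The member of the independent family attached to `x`, with `ω` identified with the set of pairs
`(k, A)` through `Denumerable.eqv`. -/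
noncomputable def indep (x : Cantor) : Cantor := fun n =>
  let p := (Denumerable.eqv (ℕ × Finset (Finset ℕ))).symm n
  decide (trace x p.1 ∈ p.2)

lemma mem_indep (x : Cantor) (k : ℕ) (A : Finset (Finset ℕ)) :
    indep x (Denumerable.eqv (ℕ × Finset (Finset ℕ)) (k, A)) = true ↔ trace x k ∈ A := by
  simp [indep]

lemma trace_ne {x y : Cantor} {i k : ℕ} (hi : x i ≠ y i) (hk : i < k) : trace x k ≠ trace y k := by
  intro h
  have h1 := Finset.ext_iff.mp h i
  simp only [trace, Finset.mem_filter, Finset.mem_range, hk, true_and] at h1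
  exact hi (Bool.eq_iff_iff.mpr h1)

lemma indep_injective : Function.Injective indep := by
  intro x y h
  by_contra hne
  obtain ⟨i, hi⟩ := Function.ne_iff.mp hne
  have h1 := (mem_indep x (i + 1) {trace x (i + 1)}).mpr (Finset.mem_singleton_self _)
  rw [h, mem_indep, Finset.mem_singleton] at h1
  exact trace_ne hi (Nat.lt_succ_self i) h1.symm

lemma isLocallyConstant_trace (k : ℕ) : IsLocallyConstant (fun x : Cantor => trace x k) := by
  rw [IsLocallyConstant.iff_eventually_eq]
  intro x
  have h : ∀ᶠ y in 𝓝 x, ∀ i ∈ Finset.range k, y i = x i := by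
    rw [Filter.eventually_all_finset]
    intro i _
    have hc : Continuous fun y : Cantor => y i := continuous_apply i
    have ho := ((isOpen_discrete {x i}).preimage hc).mem_nhds (Set.mem_singleton (x i))
    filter_upwards [ho] with y hy using hy
  filter_upwards [h] with y hy
  exact Finset.filter_congr fun i hi => by rw [hy i hi]

lemma continuous_indep : Continuous indep :=
  continuous_pi fun n =>
    ((isLocallyConstant_trace ((Denumerable.eqv (ℕ × Finset (Finset ℕ))).symm n).1).comp
      (fun t => decide (t ∈ ((Denumerable.eqv (ℕ × Finset (Finset ℕ))).symm n).2))).continuous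

/-- Flipping the `n`-th coordinate of `x` gives points different from `x` that converge to `x`. -/
lemma accPt_cantor (x : Cantor) : AccPt x (𝓟 Set.univ) := by
  rw [accPt_principal_iff_nhdsWithin]
  have h : Tendsto (fun n => Function.update x n (!x n)) atTop (𝓝[Set.univ \ {x}] x) := by
    refine tendsto_nhdsWithin_iff.mpr ⟨tendsto_pi_nhds.mpr fun i => ?_, ?_⟩
    · refine tendsto_const_nhds.congr' ?_
      filter_upwards [eventually_gt_atTop i] with n hn
      rw [Function.update_of_ne hn.ne]
    · refine Eventually.of_forall fun n => ⟨trivial, fun h => ?_⟩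
      have := congrFun (Set.mem_singleton_iff.mp h) n
      simp at this
  exact h.neBot

lemma perfect_range_indep : Perfect (Set.range indep) := by
  refine ⟨(isCompact_range continuous_indep).isClosed, ?_⟩
  rintro _ ⟨x, rfl⟩
  have := (accPt_cantor x).map continuous_indep.continuousAt indep_injective
  rwa [map_principal, Set.image_univ] at this

lemma exists_separating {G₁ G₂ : Set Cantor} (h₁ : G₁.Finite) (h₂ : G₂.Finite)
    (hd : Disjoint G₁ G₂) :
    ∃ K, ∀ k ≥ K, ∀ x ∈ G₁, ∀ y ∈ G₂, trace x k ≠ trace y k := by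
  rw [← eventually_atTop, Filter.eventually_all_finite h₁]
  intro x hx
  rw [Filter.eventually_all_finite h₂]
  intro y hy
  obtain ⟨i, hi⟩ := Function.ne_iff.mp (hd.ne_of_mem hx hy)
  filter_upwards [eventually_gt_atTop i] with k hk
  exact trace_ne hi hk

lemma indep_infinite (F₁ F₂ : Set Cantor) (hF₁ : F₁ ⊆ Set.range indep)
    (hF₂ : F₂ ⊆ Set.range indep) (h₁ : F₁.Finite) (h₂ : F₂.Finite) (hd : Disjoint F₁ F₂) :
    ((⋂ a ∈ F₁, toSet a) ∩ ⋂ a ∈ F₂, (toSet a)ᶜ).Infinite := by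
  obtain ⟨G₁, rfl⟩ := Set.subset_range_iff_exists_image_eq.mp hF₁
  obtain ⟨G₂, rfl⟩ := Set.subset_range_iff_exists_image_eq.mp hF₂
  have g₁ := h₁.of_finite_image indep_injective.injOn
  have g₂ := h₂.of_finite_image indep_injective.injOn
  obtain ⟨K, hK⟩ := exists_separating g₁ g₂ (hd.of_image)
  let A : ℕ → Finset (Finset ℕ) := fun k => g₁.toFinset.image (fun x => trace x k)
  refine Set.infinite_of_injective_forall_mem
    (f := fun j => Denumerable.eqv (ℕ × Finset (Finset ℕ)) (K + j, A (K + j))) ?_ ?_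
  · intro i j hij
    have := congrArg Prod.fst ((Denumerable.eqv _).injective hij)
    exact Nat.add_left_cancel this
  · intro j
    simp only [Set.mem_inter_iff, Set.mem_iInter, Set.forall_mem_image, Set.mem_compl_iff, toSet,
      Set.mem_ofPred_eq, mem_indep, A, Finset.mem_image, Set.Finite.mem_toFinset]
    refine ⟨fun x hx => ⟨x, hx, rfl⟩, ?_⟩
    rintro y hy ⟨x, hx, h⟩
    exact hK _ (Nat.le_add_right K j) x hx y hy h

/-- There is a perfect (closed, nonempty, no isolated points) subset of Cantor space
consisting of infinite subsets of `ω` which is independent: any finite Boolean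
combination of its distinct members has infinite intersection. -/
theorem stmt_4 :
    ∃ P : Set Cantor, Perfect P ∧ P.Nonempty ∧
      (∀ x ∈ P, (toSet x).Infinite) ∧
      (∀ F₁ F₂ : Set Cantor, F₁ ⊆ P → F₂ ⊆ P → F₁.Finite → F₂.Finite →
        Disjoint F₁ F₂ →
        ((⋂ a ∈ F₁, toSet a) ∩ ⋂ a ∈ F₂, (toSet a)ᶜ).Infinite) := by
  refine ⟨Set.range indep, perfect_range_indep, Set.range_nonempty _, fun x hx => ?_,
    indep_infinite⟩
  simpa using indep_infinite {x} ∅ (Set.singleton_subset_iff.mpr hx) (Set.empty_subset _)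
    (Set.finite_singleton x) Set.finite_empty (Set.disjoint_empty _)
end

section
/- Let X be a set and suppose ⟨𝓑_n : n < ω⟩ is a sequence of countable ω-covers of X such that 𝓑_{n+1} refines 𝓑_n for every n (every member of 𝓑_{n+1} is a subset of some member of 𝓑_n). Let ⟨x_n : n < ω⟩ be a sequence of distinct elements of X. Then the family 𝓑 = {A ∖ {x_n} : n < ω, A ∈ 𝓑_n} is an ω-cover of X, and for every γ-cover 𝓒 ⊆ 𝓑 of X and every fixed n, only finitely many members of 𝓒 are of the form A ∖ {x_n} with A ∈ 𝓑_n. -/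
/-- If `⟨𝓑 n⟩` is a sequence of countable ω-covers of `X`, each refining the previous,
and `⟨x n⟩` are distinct elements of `X`, then `𝓓 = {A ∖ {x n} : n < ω, A ∈ 𝓑 n}` is an
ω-cover of `X`, and any γ-subcover `𝓒 ⊆ 𝓓` of `X` contains, for each fixed `n`, only
finitely many sets of the form `A ∖ {x n}` with `A ∈ 𝓑 n`. -/
theorem stmt_13 {α : Type*} (X : Set α) (𝓑 : ℕ → Set (Set α))
    (hcov : ∀ n, (𝓑 n).Countable ∧ IsOmegaCover X (𝓑 n))
    (href : ∀ n, ∀ A ∈ 𝓑 (n + 1), ∃ A' ∈ 𝓑 n, A ⊆ A')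
    (x : ℕ → α) (hxd : Function.Injective x) (hxX : ∀ n, x n ∈ X) :
    IsOmegaCover X {S | ∃ n, ∃ A ∈ 𝓑 n, S = A \ {x n}} ∧
    ∀ 𝓒 ⊆ {S | ∃ n, ∃ A ∈ 𝓑 n, S = A \ {x n}}, IsGammaCover X 𝓒 →
      ∀ n, {C ∈ 𝓒 | ∃ A ∈ 𝓑 n, C = A \ {x n}}.Finite := by
  refine ⟨⟨fun F hFX hF => ?_, ?_⟩, fun 𝓒 _ hγ n => ?_⟩
  · -- The `x n` are distinct, so some `x n` avoids the finite set `F`;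
    -- removing it from a member of `𝓑 n` containing `F` does no harm.
    obtain ⟨n, hn⟩ : ∃ n, x n ∉ F := by
      by_contra! h
      exact Set.infinite_range_of_injective hxd (hF.subset (Set.range_subset_iff.2 h))
    obtain ⟨A, hA, hFA⟩ := (hcov n).2.1 F hFX hF
    exact ⟨A \ {x n}, ⟨n, A, hA, rfl⟩, Set.subset_sdiff_singleton hFA hn⟩
  · rintro ⟨n, A, -, hXA⟩
    have h := hxX n
    rw [hXA] at h
    exact h.2 rfl
  · -- Every set `A \ {x n}` omits the point `x n` of `X`.
    refine (hγ.2 (x n) (hxX n)).subset ?_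
    rintro _ ⟨hC, A, -, rfl⟩
    exact ⟨hC, fun h => h.2 rfl⟩
end
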